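/- arXiv:1604.07977 — 2 statements merged into one kernel-verified Lean document; each statement's English description precedes it below -/
import Mathlib

section
/- For every positive integer n, the cyclotomic polynomial Φ_{5n}(q) divides the q-Fibonacci polynomial F_{5n}(q) in ℤ[q]. -/
/-!
Schur's finite form of the Rogers–Ramanujan identity expresses `F_{n+1}` through Gaussian binomials:
`F_{n+1} = ∑_j (-1)^j q^{j(5j+1)/2} [n, ⌊(n - 5j)/2⌋]`.
It is proved here over a field, for `q ≠ 0`, with `j = 2i` and `j = 2i + 1` grouped into a single
summand indexed by `i : ℤ` (`schurOdd` for odd `n`; for even `n` two groupings `schurEven` and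
`schurEven'`, differing by a shift of the odd part). With these groupings the recurrence of
`qFibF` holds summand by summand, up to such shifts, by the two `q`-Pascal rules
(`schurOdd_succ`, `schurEven'_succ`).

Now let `q` be a primitive `N`-th root of unity, `N = 5m`, and `n = N - 1`. Comparing the two Pascal
rules gives `[n, k] = -q^{-k} [n, k - 1]` for `N ∤ k`, so that `[n, k] = q^{1 - 2k} [n, k - 2]`
for `k ≡ 4 (mod 5)`. The two Gaussian binomials in each summand have lower indices `k` and `k - 2`
with exactly such a `k`, and their coefficients are such that each summand vanishes
(`schurOdd_root`, `schurEven'_root`). Hence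
`F_N(q) = 0`, and `Φ_N`, being the minimal polynomial of `q` over `ℤ`, divides `F_N`.
-/

open Polynomial

/-- The Schur–Carlitz q-Fibonacci polynomials: F₀ = 0, F₁ = 1,
    Fₙ = Fₙ₋₁ + q^(n-2) Fₙ₋₂ for n ≥ 2. -/
noncomputable def qFibF : ℕ → Polynomial ℤ
  | 0 => 0
  | 1 => 1
  | (n + 2) => qFibF (n + 1) + X ^ n * qFibF n

section Schur

variable {K : Type*} [Field K]

/-- The Gaussian binomial `[n, k]` evaluated at `q`, with integer lower index; it is `0` unless
`0 ≤ k ≤ n`. -/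
def gaussBinom (q : K) : ℕ → ℤ → K
  | 0, k => if k = 0 then 1 else 0
  | n + 1, k => gaussBinom q n (k - 1) + q ^ k * gaussBinom q n k

theorem gaussBinom_succ (q : K) (n : ℕ) (k : ℤ) :
    gaussBinom q (n + 1) k = gaussBinom q n (k - 1) + q ^ k * gaussBinom q n k := rfl

theorem gaussBinom_eq_zero (q : K) (n : ℕ) (k : ℤ) (h : k < 0 ∨ (n : ℤ) < k) :
    gaussBinom q n k = 0 := by
  induction n generalizing k with
  | zero =>
    have : k ≠ 0 := by rintro rfl; simp at h
    simp [gaussBinom, this]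
  | succ n ih =>
    push_cast at h
    rw [gaussBinom_succ, ih _ (by lia), ih _ (by lia)]
    simp

/-- The second `q`-Pascal rule, dual to the one defining `gaussBinom`. -/
theorem gaussBinom_succ' {q : K} (hq : q ≠ 0) (n : ℕ) (k : ℤ) :
    gaussBinom q (n + 1) k = q ^ ((n : ℤ) + 1 - k) * gaussBinom q n (k - 1) + gaussBinom q n k := by
  induction n generalizing k with
  | zero =>
    rw [gaussBinom_succ]
    by_cases h0 : k = 0
    · subst h0; simp [gaussBinom]
    · by_cases h1 : k = 1
      · subst h1; simp [gaussBinom]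
      · simp [gaussBinom, h0, sub_eq_zero, h1]
  | succ n ih =>
    have e1 : q ^ k * q ^ ((n : ℤ) + 1 - k) = q ^ ((n : ℤ) + 1) := by
      rw [← zpow_add₀ hq]; ring_nf
    have e2 : q ^ ((n : ℤ) + 1 + 1 - k) * q ^ (k - 1) = q ^ ((n : ℤ) + 1) := by
      rw [← zpow_add₀ hq]; ring_nf
    have e3 : (n : ℤ) + 1 - (k - 1) = (n : ℤ) + 1 + 1 - k := by ring
    have a1 := ih k
    have a2 := ih (k - 1)
    have a3 := gaussBinom_succ q n k
    have a4 := gaussBinom_succ q n (k - 1)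
    rw [gaussBinom_succ q (n + 1) k]
    rw [e3] at a2
    push_cast
    linear_combination a2 + q ^ k * a1 - q ^ ((n : ℤ) + 1 + 1 - k) * a4 - a3
      + (e1 - e2) * gaussBinom q n (k - 1)

/-- The grouped summand of Schur's formula for `F_{2l+1}`, with `j = 2i` and `j = 2i + 1`. -/
def schurEven (q : K) (l : ℕ) (i : ℤ) : K :=
  q ^ (10 * i ^ 2 + i) * gaussBinom q (2 * l) (l - 5 * i)
    - q ^ (10 * i ^ 2 + 11 * i + 3) * gaussBinom q (2 * l) (l - 5 * i - 3)

/-- The grouped summand of Schur's formula for `F_{2l+1}`, with `j = 2i` and `j = 2i - 1`. -/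
def schurEven' (q : K) (l : ℕ) (i : ℤ) : K :=
  q ^ (10 * i ^ 2 + i) * gaussBinom q (2 * l) (l - 5 * i)
    - q ^ (10 * i ^ 2 - 9 * i + 2) * gaussBinom q (2 * l) (l - 5 * i + 2)

/-- The grouped summand of Schur's formula for `F_{2l+2}`, with `j = 2i` and `j = 2i + 1`. -/
def schurOdd (q : K) (l : ℕ) (i : ℤ) : K :=
  q ^ (10 * i ^ 2 + i) * gaussBinom q (2 * l + 1) (l - 5 * i)
    - q ^ (10 * i ^ 2 + 11 * i + 3) * gaussBinom q (2 * l + 1) (l - 5 * i - 2)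

/-- The recurrence `F_{2l+4} = F_{2l+3} + q^{2l+2} F_{2l+2}`, summand by summand. -/
theorem schurOdd_succ {q : K} (hq : q ≠ 0) (l : ℕ) (i : ℤ) :
    schurOdd q (l + 1) i = schurEven q (l + 1) i + q ^ (2 * l + 2) * schurOdd q l i := by
  simp only [schurOdd, schurEven]
  rw [← zpow_natCast q (2 * l + 2)]
  have a1 := gaussBinom_succ' hq (2 * (l + 1)) ((l : ℤ) + 1 - 5 * i)
  have a2 := gaussBinom_succ q (2 * (l + 1)) ((l : ℤ) + 1 - 5 * i - 2)
  have a3 := gaussBinom_succ q (2 * l + 1) ((l : ℤ) - 5 * i)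
  have a4 := gaussBinom_succ' hq (2 * l + 1) ((l : ℤ) - 5 * i - 1)
  have e1 : q ^ (10 * i ^ 2 + i) * q ^ ((l : ℤ) + 2 + 5 * i)
      = q ^ (10 * i ^ 2 + 6 * i + l + 2) := by rw [← zpow_add₀ hq]; ring_nf
  have e2 : q ^ (10 * i ^ 2 + 11 * i + 3) * q ^ ((l : ℤ) - 1 - 5 * i)
      = q ^ (10 * i ^ 2 + 6 * i + l + 2) := by rw [← zpow_add₀ hq]; ring_nf
  have e3 : q ^ (10 * i ^ 2 + 6 * i + l + 2) * q ^ ((l : ℤ) - 5 * i)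
      = q ^ ((2 : ℤ) * l + 2) * q ^ (10 * i ^ 2 + i) := by
    rw [← zpow_add₀ hq, ← zpow_add₀ hq]; ring_nf
  have e4 : q ^ (10 * i ^ 2 + 6 * i + l + 2) * q ^ ((l : ℤ) + 3 + 5 * i)
      = q ^ ((2 : ℤ) * l + 2) * q ^ (10 * i ^ 2 + 11 * i + 3) := by
    rw [← zpow_add₀ hq, ← zpow_add₀ hq]; ring_nf
  push_cast at a1 a2 a3 a4 ⊢
  rw [show (2 : ℤ) * (l + 1) + 1 - (l + 1 - 5 * i) = l + 2 + 5 * i by ring,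
    show (l : ℤ) + 1 - 5 * i - 1 = l - 5 * i by ring] at a1
  rw [show (l : ℤ) + 1 - 5 * i - 2 - 1 = l + 1 - 5 * i - 3 by ring,
    show (l : ℤ) + 1 - 5 * i - 2 = l - 5 * i - 1 by ring,
    show (l : ℤ) - 5 * i - 1 = l - 1 - 5 * i by ring] at a2
  rw [show (2 : ℤ) * l + 1 + 1 - (l - 5 * i - 1) = l + 3 + 5 * i by ring,
    show (l : ℤ) - 5 * i - 1 - 1 = l - 5 * i - 2 by ring] at a4
  rw [show (l : ℤ) - 5 * i - 1 = l - 1 - 5 * i by ring] at a3 a4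
  rw [show (l : ℤ) + 1 - 5 * i - 2 = l - 1 - 5 * i by ring]
  rw [show 2 * l + 1 + 1 = 2 * (l + 1) by ring] at a3 a4
  linear_combination q ^ (10 * i ^ 2 + i) * a1 - q ^ (10 * i ^ 2 + 11 * i + 3) * a2
    + e1 * gaussBinom q (2 * (l + 1)) (l - 5 * i)
    - e2 * gaussBinom q (2 * (l + 1)) (l - 1 - 5 * i)
    + q ^ (10 * i ^ 2 + 6 * i + l + 2) * (a3 - a4)
    + e3 * gaussBinom q (2 * l + 1) (l - 5 * i)
    - e4 * gaussBinom q (2 * l + 1) (l - 5 * i - 2)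

/-- The recurrence `F_{2l+3} = F_{2l+2} + q^{2l+1} F_{2l+1}`, summand by summand: the two terms with
`gaussBinom q (2 * l + 1)` are those of `schurOdd q l`, the second one shifted by one in `i`. -/
theorem schurEven'_succ {q : K} (hq : q ≠ 0) (l : ℕ) (i : ℤ) :
    schurEven' q (l + 1) i + q ^ (10 * (i - 1) ^ 2 + 11 * (i - 1) + 3)
        * gaussBinom q (2 * l + 1) (l - 5 * (i - 1) - 2)
      = q ^ (10 * i ^ 2 + i) * gaussBinom q (2 * l + 1) (l - 5 * i)
        + q ^ (2 * l + 1) * schurEven' q l i := by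
  simp only [schurEven']
  rw [← zpow_natCast q (2 * l + 1)]
  have a1 := gaussBinom_succ q (2 * l + 1) ((l : ℤ) + 1 - 5 * i)
  have a2 := gaussBinom_succ' hq (2 * l + 1) ((l : ℤ) + 3 - 5 * i)
  have a3 := gaussBinom_succ' hq (2 * l) ((l : ℤ) + 1 - 5 * i)
  have a4 := gaussBinom_succ q (2 * l) ((l : ℤ) + 2 - 5 * i)
  have e1 : q ^ (10 * i ^ 2 + i) * q ^ ((l : ℤ) + 1 - 5 * i)
      = q ^ (10 * i ^ 2 - 4 * i + l + 1) := by rw [← zpow_add₀ hq]; ring_nf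
  have e2 : q ^ (10 * i ^ 2 - 9 * i + 2) * q ^ ((l : ℤ) - 1 + 5 * i)
      = q ^ (10 * i ^ 2 - 4 * i + l + 1) := by rw [← zpow_add₀ hq]; ring_nf
  have e3 : q ^ (10 * i ^ 2 - 4 * i + l + 1) * q ^ ((l : ℤ) + 5 * i)
      = q ^ ((2 : ℤ) * l + 1) * q ^ (10 * i ^ 2 + i) := by
    rw [← zpow_add₀ hq, ← zpow_add₀ hq]; ring_nf
  have e4 : q ^ (10 * i ^ 2 - 4 * i + l + 1) * q ^ ((l : ℤ) + 2 - 5 * i)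
      = q ^ ((2 : ℤ) * l + 1) * q ^ (10 * i ^ 2 - 9 * i + 2) := by
    rw [← zpow_add₀ hq, ← zpow_add₀ hq]; ring_nf
  push_cast at a1 a2 a3 a4 ⊢
  rw [show (l : ℤ) + 1 - 5 * i - 1 = l - 5 * i by ring] at a1 a3
  rw [show (2 : ℤ) * l + 1 + 1 - (l + 3 - 5 * i) = l - 1 + 5 * i by ring,
    show (l : ℤ) + 3 - 5 * i - 1 = l + 2 - 5 * i by ring] at a2
  rw [show (2 : ℤ) * l + 1 - (l + 1 - 5 * i) = l + 5 * i by ring] at a3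
  rw [show (l : ℤ) + 2 - 5 * i - 1 = l + 1 - 5 * i by ring] at a4
  rw [show (l : ℤ) + 1 - 5 * i + 2 = l + 3 - 5 * i by ring,
    show (l : ℤ) - 5 * i + 2 = l + 2 - 5 * i by ring,
    show (l : ℤ) - 5 * (i - 1) - 2 = l + 3 - 5 * i by ring,
    show 10 * (i - 1) ^ 2 + 11 * (i - 1) + 3 = 10 * i ^ 2 - 9 * i + 2 by ring]
  rw [show 2 * l + 1 + 1 = 2 * (l + 1) by ring] at a1 a2
  linear_combination q ^ (10 * i ^ 2 + i) * a1 - q ^ (10 * i ^ 2 - 9 * i + 2) * a2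
    + e1 * gaussBinom q (2 * l + 1) (l + 1 - 5 * i)
    - e2 * gaussBinom q (2 * l + 1) (l + 2 - 5 * i)
    + q ^ (10 * i ^ 2 - 4 * i + l + 1) * (a3 - a4)
    + e3 * gaussBinom q (2 * l) (l - 5 * i)
    - e4 * gaussBinom q (2 * l) (l + 2 - 5 * i)

theorem sum_shift_eq (M : ℕ) (f : ℤ → K) (h1 : f (-M - 1) = 0) (h2 : f (M - 1) = 0) :
    ∑ r ∈ Finset.range (2 * M), f ((r : ℤ) - M - 1)
      = ∑ r ∈ Finset.range (2 * M), f ((r : ℤ) - M) := by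
  have h := Finset.sum_range_sub (fun r : ℕ => f ((r : ℤ) - M - 1)) (2 * M)
  simp only [Finset.sum_sub_distrib] at h
  push_cast at h
  rw [show (2 : ℤ) * M - M - 1 = M - 1 by ring, show (0 : ℤ) - M - 1 = -M - 1 by ring, h1, h2,
    sub_zero, sub_eq_zero] at h
  rw [← h]
  refine Finset.sum_congr rfl fun r _ => ?_
  congr 1
  ring

theorem sum_schurEven_eq (q : K) {l M : ℕ} (h : l < M) :
    ∑ r ∈ Finset.range (2 * M), schurEven q l ((r : ℤ) - M)
      = ∑ r ∈ Finset.range (2 * M), schurEven' q l ((r : ℤ) - M) := by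
  have hs := sum_shift_eq M (fun i => q ^ (10 * i ^ 2 + 11 * i + 3)
    * gaussBinom q (2 * l) (l - 5 * i - 3))
    (by rw [gaussBinom_eq_zero _ _ _ (by push_cast; lia), mul_zero])
    (by rw [gaussBinom_eq_zero _ _ _ (by push_cast; lia), mul_zero])
  simp only [schurEven, schurEven', Finset.sum_sub_distrib]
  rw [← hs]
  congr 1
  refine Finset.sum_congr rfl fun r _ => ?_
  congr 2 <;> ring

/-- Schur's formula: the grouped summands add up to the `q`-Fibonacci polynomials. The range
`-M ≤ i < M` contains all nonzero summands. -/
theorem sum_schur {q : K} (hq : q ≠ 0) (M l : ℕ) (h : l < M) :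
    ∑ r ∈ Finset.range (2 * M), schurEven q l ((r : ℤ) - M) = aeval q (qFibF (2 * l + 1)) ∧
    ∑ r ∈ Finset.range (2 * M), schurOdd q l ((r : ℤ) - M) = aeval q (qFibF (2 * l + 2)) := by
  induction l with
  | zero =>
    -- only the summand with `r = M`, that is `i = 0`, survives
    constructor
    · rw [Finset.sum_eq_single M]
      · simp [schurEven, gaussBinom, qFibF]
      · intro r _ hr
        have h1 : ¬ (-(5 * ((r : ℤ) - M)) = 0) := by lia
        have h2 : ¬ (-(5 * ((r : ℤ) - M)) - 3 = 0) := by lia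
        simp only [schurEven, gaussBinom, mul_zero, Nat.cast_zero, zero_sub, h1, h2, if_false,
          sub_self]
      · intro hM
        exact absurd (Finset.mem_range.2 (by lia)) hM
    · rw [Finset.sum_eq_single M]
      · simp [schurOdd, gaussBinom, qFibF]
      · intro r _ hr
        simp only [schurOdd]
        rw [gaussBinom_eq_zero _ _ _ (by push_cast; lia),
          gaussBinom_eq_zero _ _ _ (by push_cast; lia)]
        simp
      · intro hM
        exact absurd (Finset.mem_range.2 (by lia)) hM
  | succ l ih =>
    obtain ⟨hE, hO⟩ := ih (by lia)
    have hE' : ∑ r ∈ Finset.range (2 * M), schurEven q (l + 1) ((r : ℤ) - M)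
        = aeval q (qFibF (2 * l + 3)) := by
      have hs := sum_shift_eq M (fun i => q ^ (10 * i ^ 2 + 11 * i + 3)
        * gaussBinom q (2 * l + 1) (l - 5 * i - 2))
        (by rw [gaussBinom_eq_zero _ _ _ (by push_cast; lia), mul_zero])
        (by rw [gaussBinom_eq_zero _ _ _ (by push_cast; lia), mul_zero])
      have ht := Finset.sum_congr (rfl : Finset.range (2 * M) = _)
        fun r _ => schurEven'_succ hq l ((r : ℤ) - M)
      rw [sum_schurEven_eq q (by lia)] at hE
      simp only [Finset.sum_add_distrib, ← Finset.mul_sum] at ht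
      simp only [schurOdd, Finset.sum_sub_distrib] at hO
      rw [sum_schurEven_eq q h, qFibF, map_add, map_mul, map_pow, aeval_X, ← hE]
      linear_combination ht - hs + hO
    refine ⟨hE', ?_⟩
    simp only [schurOdd_succ hq, Finset.sum_add_distrib, ← Finset.mul_sum]
    have hF : qFibF (2 * (l + 1) + 2) = qFibF (2 * l + 3) + X ^ (2 * l + 2) * qFibF (2 * l + 2) :=
      qFibF.eq_3 (2 * l + 2)
    rw [hE', hO, hF, map_add, map_mul, map_pow, aeval_X]

/-- At a primitive `(n + 1)`-th root of unity the two Pascal rules for `[n + 1, k]` read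
`[n, k - 1] + q ^ k [n, k] = q ^ (-k) [n, k - 1] + [n, k]`. -/
theorem gaussBinom_root {q : K} {n : ℕ} (hq : IsPrimitiveRoot q (n + 1)) {k : ℤ}
    (hk : ¬ ((n : ℤ) + 1 ∣ k)) :
    q ^ k * gaussBinom q n k = -gaussBinom q n (k - 1) := by
  have hq0 : q ≠ 0 := hq.ne_zero (by lia)
  have h := gaussBinom_succ' hq0 n k
  have h1 : q ^ ((n : ℤ) + 1) = 1 := by exact_mod_cast hq.pow_eq_one
  have hk1 : q ^ k - 1 ≠ 0 := fun e => hk (by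
    exact_mod_cast (hq.zpow_eq_one_iff_dvd k).1 (sub_eq_zero.1 e))
  rw [gaussBinom_succ, zpow_sub₀ hq0, h1] at h
  have hk0 : q ^ k ≠ 0 := zpow_ne_zero _ hq0
  field_simp at h
  refine mul_left_cancel₀ hk1 ?_
  linear_combination h

theorem gaussBinom_root_two {q : K} {n : ℕ} (hq : IsPrimitiveRoot q (n + 1)) {k : ℤ}
    (h5 : (5 : ℤ) ∣ n + 1) (hk : k % 5 = 4) :
    q ^ (2 * k) * gaussBinom q n k = q * gaussBinom q n (k - 2) := by
  have hq0 : q ≠ 0 := hq.ne_zero (by lia)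
  have h1 := gaussBinom_root hq (k := k) fun h => by have := h5.trans h; lia
  have h2 := gaussBinom_root hq (k := k - 1) fun h => by have := h5.trans h; lia
  rw [show k - 1 - 1 = k - 2 by ring, zpow_sub_one₀ hq0] at h2
  field_simp at h2
  rw [two_mul, zpow_add₀ hq0]
  linear_combination q ^ k * h1 - h2

theorem schurOdd_root {q : K} {l : ℕ} (hq : IsPrimitiveRoot q (2 * l + 1 + 1))
    (h5 : 5 ∣ 2 * l + 1 + 1) (i : ℤ) : schurOdd q l i = 0 := by
  have hq0 : q ≠ 0 := hq.ne_zero (by lia)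
  have h := gaussBinom_root_two hq (k := l - 5 * i) (by exact_mod_cast h5) (by lia)
  have h1 : q ^ ((2 : ℤ) * l + 2) = 1 := by exact_mod_cast hq.pow_eq_one
  have e1 : q ^ (10 * i ^ 2 + 11 * i + 2) * q ^ (2 * ((l : ℤ) - 5 * i))
      = q ^ (10 * i ^ 2 + i) := by
    rw [← zpow_add₀ hq0, ← mul_one (q ^ (10 * i ^ 2 + i)), ← h1, ← zpow_add₀ hq0]; ring_nf
  have e2 : q ^ (10 * i ^ 2 + 11 * i + 2) * q = q ^ (10 * i ^ 2 + 11 * i + 3) := by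
    rw [← zpow_add_one₀ hq0]; ring_nf
  simp only [schurOdd]
  rw [← e1, ← e2]
  linear_combination q ^ (10 * i ^ 2 + 11 * i + 2) * h

theorem schurEven'_root {q : K} {l : ℕ} (hq : IsPrimitiveRoot q (2 * l + 1))
    (h5 : 5 ∣ 2 * l + 1) (i : ℤ) : schurEven' q l i = 0 := by
  have hq0 : q ≠ 0 := hq.ne_zero (by lia)
  have h := gaussBinom_root_two hq (k := l - 5 * i + 2) (by exact_mod_cast h5) (by lia)
  have h1 : q ^ ((2 : ℤ) * l + 1) = 1 := by exact_mod_cast hq.pow_eq_one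
  have e1 : q ^ (10 * i ^ 2 + i - 1) * q ^ (2 * ((l : ℤ) - 5 * i + 2))
      = q ^ (10 * i ^ 2 - 9 * i + 2) := by
    rw [← zpow_add₀ hq0, ← mul_one (q ^ (10 * i ^ 2 - 9 * i + 2)), ← h1, ← zpow_add₀ hq0]; ring_nf
  have e2 : q ^ (10 * i ^ 2 + i - 1) * q = q ^ (10 * i ^ 2 + i) := by
    rw [← zpow_add_one₀ hq0]; ring_nf
  rw [show (l : ℤ) - 5 * i + 2 - 2 = l - 5 * i by ring] at h
  simp only [schurEven']
  rw [← e1, ← e2]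
  linear_combination -q ^ (10 * i ^ 2 + i - 1) * h

theorem aeval_qFibF_eq_zero {q : K} {N : ℕ} (hN : 0 < N) (h5 : 5 ∣ N) (hq : IsPrimitiveRoot q N) :
    aeval q (qFibF N) = 0 := by
  have hq0 : q ≠ 0 := hq.ne_zero hN.ne'
  obtain ⟨n, rfl⟩ : ∃ n, N = n + 1 := ⟨N - 1, by lia⟩
  obtain ⟨l, rfl | rfl⟩ := n.even_or_odd'
  · rw [← (sum_schur hq0 (l + 1) l (by lia)).1, sum_schurEven_eq q (by lia)]
    exact Finset.sum_eq_zero fun r _ => schurEven'_root hq h5 _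
  · rw [← (sum_schur hq0 (l + 1) l (by lia)).2]
    exact Finset.sum_eq_zero fun r _ => schurOdd_root hq h5 _

end Schur

theorem cyclotomic_dvd_qFibF_five_mul (n : ℕ) (hn : 0 < n) :
    Polynomial.cyclotomic (5 * n) ℤ ∣ qFibF (5 * n) := by
  have hN : 0 < 5 * n := by lia
  have hq := Complex.isPrimitiveRoot_exp (5 * n) hN.ne'
  rw [cyclotomic_eq_minpoly hq hN]
  exact minpoly.isIntegrallyClosed_dvd (hq.isIntegral hN)
    (aeval_qFibF_eq_zero hN (dvd_mul_right 5 n) hq)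
end

section
/- For every nonnegative integer m, G_{5m+1}(q) ≡ q^m (mod Φ_{5m+1}(q)) in ℤ[q]; equivalently, the cyclotomic polynomial Φ_{5m+1}(q) divides G_{5m+1}(q) − q^m. -/
/-!
The proof rests on Schur's formula
`G_n = ∑_j (-1)^j q^(j(5j-3)/2) [n, ⌊(n-5j)/2⌋ + 1]_q`, the sum being over all integers `j`
(`eval_qFibG_eq_schurSum`). It holds because the right side obeys the recurrence of `G`: after two
applications of the two `q`-Pascal rules, the defect of the recurrence in the `j`-th term is a
difference `W j - W (j - 1)`, so it telescopes away (`schurTerm_rec`).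

Let now `q` be a primitive `N`-th root of unity, `N = 5m+1`. Then `[N, k]_q = 0` for `0 < k < N`
(`qBinom_eq_zero_of_primitive`), and the indices `⌊(N-5j)/2⌋ + 1` hit `0` or `N` only for `j = -m`.
The surviving term `(-1)^m q^(m(5m+3)/2)` equals `q^m`: for even `m` because `q^N = 1`, for odd `m`
because `q^(N/2) = -1`. Since `Φ_N` is the minimal polynomial of `q` over `ℤ`, the divisibility
follows.
-/

open Polynomial

/-- The Schur–Carlitz q-Fibonacci polynomials G: G₀ = 0, G₁ = 1,
    Gₙ = Gₙ₋₁ + q^(n-1) Gₙ₋₂ for n ≥ 2. -/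
noncomputable def qFibG : ℕ → Polynomial ℤ
  | 0 => 0
  | 1 => 1
  | (n + 2) => qFibG (n + 1) + X ^ (n + 1) * qFibG n

/-- The Gaussian binomial coefficient `[n, k]_q`, evaluated at an element `q` of a field. The lower
index ranges over `ℤ`, the value being `0` outside `0 ≤ k ≤ n`. -/
def qBinom {K : Type*} [Field K] (q : K) : ℕ → ℤ → K
  | 0, k => if k = 0 then 1 else 0
  | n + 1, k => qBinom q n (k - 1) + q ^ k * qBinom q n k

section
variable {K : Type*} [Field K] {q : K}

lemma qBinom_succ (n : ℕ) (k : ℤ) :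
    qBinom q (n + 1) k = qBinom q n (k - 1) + q ^ k * qBinom q n k := rfl

lemma qBinom_of_neg (n : ℕ) : ∀ k : ℤ, k < 0 → qBinom q n k = 0 := by
  induction n with
  | zero => intro k hk; simp [qBinom, hk.ne]
  | succ n ih =>
    intro k hk
    rw [qBinom_succ, ih _ hk, ih _ (by omega)]; simp

lemma qBinom_of_gt (n : ℕ) : ∀ k : ℤ, (n : ℤ) < k → qBinom q n k = 0 := by
  induction n with
  | zero => intro k hk; simp at hk; simp [qBinom, hk.ne']
  | succ n ih =>
    intro k hk
    push_cast at hk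
    rw [qBinom_succ, ih _ (by omega), ih _ (by omega)]; simp

lemma qBinom_self (n : ℕ) : qBinom q n n = 1 := by
  induction n with
  | zero => simp [qBinom]
  | succ n ih =>
    rw [qBinom_succ, qBinom_of_gt n ((n + 1 : ℕ) : ℤ) (by push_cast; omega)]
    simp [ih]

/-- The second `q`-Pascal rule. -/
lemma qBinom_succ' (hq : q ≠ 0) (n : ℕ) : ∀ k : ℤ,
    qBinom q (n + 1) k = qBinom q n k + q ^ ((n : ℤ) + 1 - k) * qBinom q n (k - 1) := by
  induction n with
  | zero =>
    intro k
    by_cases h0 : k = 0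
    · subst h0; simp [qBinom]
    by_cases h1 : k = 1
    · subst h1; simp [qBinom]
    simp [qBinom, h0, sub_eq_zero, h1]
  | succ n ih =>
    intro k
    have h1 := qBinom_succ (q := q) (n + 1) k
    have h2 := qBinom_succ (q := q) n k
    have h3 := qBinom_succ (q := q) n (k - 1)
    have h4 := ih (k - 1)
    have h5 := ih k
    have e1 : q ^ k * q ^ ((n : ℤ) + 1 - k) = q ^ ((n : ℤ) + 1) := by
      rw [← zpow_add₀ hq]; ring_nf
    have e2 : q ^ (((n + 1 : ℕ) : ℤ) + 1 - k) * q ^ (k - 1) = q ^ ((n : ℤ) + 1) := by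
      rw [← zpow_add₀ hq]; push_cast; ring_nf
    have e3 : ((n : ℤ) + 1 - (k - 1)) = (((n + 1 : ℕ) : ℤ) + 1 - k) := by push_cast; ring
    rw [e3] at h4
    linear_combination h1 - h2 + h4 + q ^ k * h5 - q ^ (((n + 1 : ℕ) : ℤ) + 1 - k) * h3
      + (qBinom q n (k - 1)) * e1 - (qBinom q n (k - 1)) * e2

lemma qBinom_eq_zero_of_primitive {N : ℕ} (h : IsPrimitiveRoot q N) {k : ℤ}
    (h0 : 0 < k) (hN : k < N) : qBinom q N k = 0 := by
  obtain ⟨n, rfl⟩ : ∃ n, N = n + 1 := ⟨N - 1, by omega⟩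
  have hq : q ≠ 0 := h.ne_zero (by omega)
  have e : q ^ k * q ^ ((n : ℤ) + 1 - k) = 1 := by
    rw [← zpow_add₀ hq, ← h.pow_eq_one, ← zpow_natCast]; congr 1; push_cast; ring
  have h1 := qBinom_succ (q := q) n k
  have h2 := qBinom_succ' hq n k
  -- eliminating `qBinom q n k` from the two Pascal rules leaves the factor `1 - q ^ (n + 1) = 0`
  have h3 : (1 - q ^ k) * qBinom q (n + 1) k = 0 := by
    linear_combination h1 - q ^ k * h2 - qBinom q n (k - 1) * e
  refine (mul_eq_zero.mp h3).resolve_left fun hk => ?_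
  have := (h.zpow_eq_one_iff_dvd k).mp (sub_eq_zero.mp hk).symm
  have := Int.le_of_dvd h0 this
  omega

variable (q) in
/-- The `j`-th term of Schur's bilateral sum for `G_n(q)`; the exponent is an exact quotient, the
lower index of the Gaussian binomial is rounded down. -/
def schurTerm (n : ℕ) (j : ℤ) : K :=
  (-1) ^ j * q ^ (j * (5 * j - 3) / 2) * qBinom q n (((n : ℤ) - 5 * j) / 2 + 1)

variable (q) in
/-- The telescoping certificate for the recurrence of Schur's sum. -/
def schurCert (n : ℕ) (j : ℤ) : K :=
  if Even ((n : ℤ) - 5 * j) then 0 else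
    (-1) ^ j * q ^ (j * (5 * j - 3) / 2 + (n + 1 - ((n : ℤ) - 5 * j) / 2 - 1)) *
      qBinom q n (((n : ℤ) - 5 * j) / 2)

lemma schurTerm_rec (hq : q ≠ 0) (n : ℕ) (j : ℤ) :
    schurTerm q (n + 2) j - schurTerm q (n + 1) j - q ^ (n + 1) * schurTerm q n j
      = schurCert q n j - schurCert q n (j - 1) := by
  obtain ⟨c, hc⟩ : ∃ c, j * (5 * j - 3) = 2 * c := by
    rcases Int.even_or_odd' j with ⟨a, rfl | rfl⟩
    · exact ⟨a * (5 * (2 * a) - 3), by ring⟩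
    · exact ⟨(2 * a + 1) * (5 * a + 1), by ring⟩
  have he : j * (5 * j - 3) / 2 = c := by omega
  have he' : (j - 1) * (5 * (j - 1) - 3) / 2 = c - 5 * j + 4 := by
    have : (j - 1) * (5 * (j - 1) - 3) = 2 * (c - 5 * j + 4) := by linear_combination hc
    omega
  have hs : (-1 : K) ^ (j - 1) = - (-1) ^ j := by
    rw [zpow_sub_one₀ (by simp)]; simp
  unfold schurTerm schurCert
  rw [he, he', hs]
  rcases Int.even_or_odd' ((n : ℤ) - 5 * j) with ⟨a, ha | ha⟩
  · rw [if_pos (by rw [ha]; simp), if_neg (by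
      rw [Int.not_even_iff_odd]; exact ⟨a + 2, by linarith⟩)]
    rw [show (((n + 2 : ℕ) : ℤ) - 5 * j) / 2 + 1 = a + 2 by omega,
      show (((n + 1 : ℕ) : ℤ) - 5 * j) / 2 + 1 = a + 1 by omega,
      show ((n : ℤ) - 5 * j) / 2 + 1 = a + 1 by omega,
      show ((n : ℤ) - 5 * (j - 1)) / 2 = a + 2 by omega]
    have h1 := qBinom_succ (q := q) (n + 1) (a + 2)
    have h2 := qBinom_succ' hq n (a + 2)
    rw [show a + 2 - 1 = a + 1 by ring] at h1 h2
    rw [h1, h2]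
    have e1 : q ^ (a + 2) * q ^ ((n : ℤ) + 1 - (a + 2)) = q ^ (n + 1) := by
      rw [← zpow_add₀ hq, ← zpow_natCast]; congr 1; push_cast; ring
    have e2 : q ^ (c - 5 * j + 4 + ((n : ℤ) + 1 - (a + 2) - 1)) = q ^ c * q ^ (a + 2) := by
      rw [← zpow_add₀ hq]; congr 1; linarith
    rw [e2]
    linear_combination (-1) ^ j * q ^ c * qBinom q n (a + 1) * e1
  · rw [if_neg (by rw [Int.not_even_iff_odd, ha]; exact ⟨a, rfl⟩),
      if_pos ⟨a + 3, by linarith⟩]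
    rw [show (((n + 2 : ℕ) : ℤ) - 5 * j) / 2 + 1 = a + 2 by omega,
      show (((n + 1 : ℕ) : ℤ) - 5 * j) / 2 + 1 = a + 2 by omega,
      show ((n : ℤ) - 5 * j) / 2 + 1 = a + 1 by omega,
      show ((n : ℤ) - 5 * j) / 2 = a by omega]
    have h1 := qBinom_succ' hq (n + 1) (a + 2)
    have h2 := qBinom_succ (q := q) n (a + 1)
    rw [show a + 2 - 1 = a + 1 by ring] at h1
    rw [show a + 1 - 1 = a by ring] at h2
    rw [h1, h2]
    have e1 : q ^ (((n + 1 : ℕ) : ℤ) + 1 - (a + 2)) * q ^ (a + 1) = q ^ (n + 1) := by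
      rw [← zpow_add₀ hq, ← zpow_natCast]; congr 1; push_cast; ring
    have e2 : q ^ (c + ((n : ℤ) + 1 - a - 1))
        = q ^ c * q ^ (((n + 1 : ℕ) : ℤ) + 1 - (a + 2)) := by
      rw [← zpow_add₀ hq]; congr 1; push_cast; ring
    rw [e2]
    linear_combination (-1) ^ j * q ^ c * qBinom q n (a + 1) * e1

variable (q) in
/-- Schur's sum for `G_n(q)`, truncated to `-M ≤ j ≤ M`; no nonzero term is lost for `n ≤ M`. -/
def schurSum (M n : ℕ) : K := ∑ i ∈ Finset.range (2 * M + 1), schurTerm q n ((i : ℤ) - M)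

lemma schurSum_rec (hq : q ≠ 0) {M n : ℕ} (h : n < M) :
    schurSum q M (n + 2) = schurSum q M (n + 1) + q ^ (n + 1) * schurSum q M n := by
  have key : schurSum q M (n + 2) - schurSum q M (n + 1) - q ^ (n + 1) * schurSum q M n = 0 := by
    unfold schurSum
    rw [Finset.mul_sum, ← Finset.sum_sub_distrib, ← Finset.sum_sub_distrib]
    simp_rw [schurTerm_rec hq]
    have := Finset.sum_range_sub (fun i : ℕ => schurCert q n ((i : ℤ) - M - 1)) (2 * M + 1)
    have hcongr : ∀ i : ℕ, (((i + 1 : ℕ) : ℤ) - M - 1) = (i : ℤ) - M := by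
      intro i; push_cast; ring
    simp only [hcongr] at this
    rw [this]
    unfold schurCert
    rw [qBinom_of_neg n _ (by push_cast; omega), qBinom_of_gt n _ (by push_cast; omega)]
    simp
  linear_combination key

lemma eval_qFibG_eq_schurSum (hq : q ≠ 0) (M : ℕ) : ∀ n : ℕ, n ≤ M →
    aeval q (qFibG n) = schurSum q M n
  | 0, _ => by
    simp only [qFibG, map_zero, schurSum]
    symm
    refine Finset.sum_eq_zero fun i _ => ?_
    rw [schurTerm, qBinom, if_neg (by push_cast; omega), mul_zero]
  | 1, _ => by
    simp only [qFibG, map_one, schurSum]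
    rw [Finset.sum_eq_single M]
    · have := qBinom_self (q := q) 1
      simpa [schurTerm] using this.symm
    · intro i _ hi
      rw [schurTerm]
      rcases lt_or_gt_of_ne hi with h | h
      · rw [qBinom_of_gt 1 _ (by push_cast; omega), mul_zero]
      · rw [qBinom_of_neg 1 _ (by push_cast; omega), mul_zero]
    · intro h; exact absurd (Finset.mem_range.mpr (by omega)) h
  | n + 2, h => by
    rw [schurSum_rec hq (by omega), ← eval_qFibG_eq_schurSum hq M n (by omega),
      ← eval_qFibG_eq_schurSum hq M (n + 1) (by omega), qFibG]
    simp

lemma surviving_term {m : ℕ} (h : IsPrimitiveRoot q (5 * m + 1)) :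
    (-1 : K) ^ (-(m : ℤ)) * q ^ (-(m : ℤ) * (5 * -(m : ℤ) - 3) / 2) = q ^ m := by
  have hN := h.pow_eq_one
  rcases Nat.even_or_odd' m with ⟨s, rfl | rfl⟩
  · have e : -((2 * s : ℕ) : ℤ) * (5 * -((2 * s : ℕ) : ℤ) - 3) / 2
        = (((5 * (2 * s) + 1) * s + 2 * s : ℕ) : ℤ) := by
      apply Int.ediv_eq_of_eq_mul_left (by norm_num); push_cast; ring
    rw [e, zpow_natCast, pow_add, pow_mul, hN, Even.neg_one_zpow (by simp)]
    simp
  · have e : -((2 * s + 1 : ℕ) : ℤ) * (5 * -((2 * s + 1 : ℕ) : ℤ) - 3) / 2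
        = (((5 * (2 * s + 1) + 1) * s + (5 * s + 3) + (2 * s + 1) : ℕ) : ℤ) := by
      apply Int.ediv_eq_of_eq_mul_left (by norm_num); push_cast; ring
    have hh : q ^ (5 * s + 3) = -1 := by
      have h2 : q ^ (5 * s + 3) * q ^ (5 * s + 3) = 1 := by
        rw [← pow_add, ← hN]; congr 1; ring
      refine (mul_self_eq_one_iff.mp h2).resolve_left ?_
      exact h.pow_ne_one_of_pos_of_lt (by omega) (by omega)
    rw [e, zpow_natCast, pow_add, pow_add, pow_mul, hN, hh, Odd.neg_one_zpow]
    · simp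
    · rw [Int.odd_iff]; push_cast; omega

lemma eval_qFibG_of_primitive {m : ℕ} (h : IsPrimitiveRoot q (5 * m + 1)) :
    aeval q (qFibG (5 * m + 1)) = q ^ m := by
  rw [eval_qFibG_eq_schurSum (h.ne_zero (by omega)) (5 * m + 1) _ le_rfl, schurSum,
    -- the index of the term `j = -m`
    Finset.sum_eq_single (4 * m + 1)]
  · have hj : ((4 * m + 1 : ℕ) : ℤ) - ((5 * m + 1 : ℕ) : ℤ) = -(m : ℤ) := by push_cast; ring
    rw [hj, schurTerm, surviving_term h,
      show (((5 * m + 1 : ℕ) : ℤ) - 5 * -(m : ℤ)) / 2 + 1 = ((5 * m + 1 : ℕ) : ℤ) by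
        push_cast; omega, qBinom_self, mul_one]
  · intro i _ hi
    rw [schurTerm]
    set k := (((5 * m + 1 : ℕ) : ℤ) - 5 * ((i : ℤ) - ((5 * m + 1 : ℕ) : ℤ))) / 2 + 1 with hk
    push_cast at hk
    have hk0 : k ≠ 0 := by omega
    have hkN : k ≠ 5 * m + 1 := by omega
    have : qBinom q (5 * m + 1) k = 0 := by
      rcases lt_or_gt_of_ne hk0 with h1 | h1
      · exact qBinom_of_neg _ _ h1
      rcases lt_or_gt_of_ne hkN with h2 | h2
      · exact qBinom_eq_zero_of_primitive h h1 (by push_cast; omega)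
      · exact qBinom_of_gt _ _ (by push_cast; omega)
    rw [this, mul_zero]
  · intro h; exact absurd (Finset.mem_range.mpr (by omega)) h

end

theorem qFibG_mod_cyclotomic_5 (m : ℕ) :
    Polynomial.cyclotomic (5 * m + 1) ℤ ∣ (qFibG (5 * m + 1) - X ^ m) := by
  have h := Complex.isPrimitiveRoot_exp (5 * m + 1) (by omega)
  rw [Polynomial.cyclotomic_eq_minpoly h (by omega)]
  refine minpoly.isIntegrallyClosed_dvd (h.isIntegral (by omega)) ?_
  rw [map_sub, eval_qFibG_of_primitive h]
  simp
end
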